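/- For any atom p of L: ⊨ p ∨ ¬p, while p ∨ ¬p is not derivable in intuitionistic propositional natural deduction, i.e. ⊬_IL p ∨ ¬p. (The explicit witness used for Theorem 1.) -/

import Mathlib

/-!
The law of excluded middle holds on every single base because the implication clause of Base
Semantics is read in the metalanguage on that same base: if `p` is not derivable in `B`, then
`p → ⊥` holds on `B` vacuously. Excluded middle in the metalanguage decides which disjunct holds.

For underivability, intuitionistic natural deduction is sound for valuations in any Heyting algebra
(`IL.sound`). In the three-element chain `0 < 1 < 2`, giving every atom the middle value makes the
value of `¬p` equal to `0`, so `p ∨ ¬p` has value `1`, which is not the top element.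
-/

/-- Formulas of the propositional language L. -/
inductive Formula : Type
  | atom : ℕ → Formula
  | bot  : Formula
  | and  : Formula → Formula → Formula
  | or   : Formula → Formula → Formula
  | imp  : Formula → Formula → Formula
deriving DecidableEq

/-- Negation: ¬A := A → ⊥. -/
def Formula.neg (A : Formula) : Formula := .imp A .bot

/-- An atom: `some n` is the n-th propositional atom p_n, `none` is ⊥. -/
def atomFormula : Option ℕ → Formula
  | some n => .atom n
  | none   => .bot

/-- A production rule: finitely many atomic premises (none of which is ⊥)
    and an atomic conclusion (possibly ⊥). -/
structure AtomicRule : Type where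
  prems : List ℕ
  concl : Option ℕ

/-- An atomic base: a set of production rules. -/
abbrev AtomicBase : Type := Set AtomicRule

/-- Derivability ⊢_B a of an atom in a base B. -/
inductive AtomDerives (B : AtomicBase) : Option ℕ → Prop
  | rule (r : AtomicRule) (hr : r ∈ B)
      (h : ∀ p ∈ r.prems, AtomDerives B (some p)) : AtomDerives B r.concl

/-- B is consistent iff ⊥ is not derivable in B. -/
def Consistent (B : AtomicBase) : Prop := ¬ AtomDerives B none

/-- ⊨_B A (validity of A on the base B, i.e. ∅ ⊨_B A). -/
def BValid (B : AtomicBase) : Formula → Prop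
  | .atom n  => AtomDerives B (some n)
  | .bot     => AtomDerives B none
  | .and X Y => BValid B X ∧ BValid B Y
  | .or X Y  => BValid B X ∨ BValid B Y
  | .imp X Y => BValid B X → BValid B Y

/-- Γ ⊨_B A. -/
def BCons (B : AtomicBase) (Γ : Set Formula) (A : Formula) : Prop :=
  (∀ G ∈ Γ, BValid B G) → BValid B A

/-- Logical consequence Γ ⊨ A: Γ ⊨_B A on every consistent atomic base. -/
def Cons (Γ : Set Formula) (A : Formula) : Prop :=
  ∀ B : AtomicBase, Consistent B → BCons B Γ A

/-- Intuitionistic propositional natural deduction. -/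
inductive IL : Set Formula → Formula → Prop
  | ax    {Γ A} : A ∈ Γ → IL Γ A
  | andI  {Γ A B} : IL Γ A → IL Γ B → IL Γ (.and A B)
  | andE1 {Γ A B} : IL Γ (.and A B) → IL Γ A
  | andE2 {Γ A B} : IL Γ (.and A B) → IL Γ B
  | orI1  {Γ A B} : IL Γ A → IL Γ (.or A B)
  | orI2  {Γ A B} : IL Γ B → IL Γ (.or A B)
  | orE   {Γ A B C} : IL Γ (.or A B) → IL (insert A Γ) C → IL (insert B Γ) C → IL Γ C
  | impI  {Γ A B} : IL (insert A Γ) B → IL Γ (.imp A B)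
  | impE  {Γ A B} : IL Γ (.imp A B) → IL Γ A → IL Γ B
  | botE  {Γ A} : IL Γ .bot → IL Γ A

/-- Classical propositional natural deduction: IL + double negation elimination. -/
inductive CL : Set Formula → Formula → Prop
  | ax    {Γ A} : A ∈ Γ → CL Γ A
  | andI  {Γ A B} : CL Γ A → CL Γ B → CL Γ (.and A B)
  | andE1 {Γ A B} : CL Γ (.and A B) → CL Γ A
  | andE2 {Γ A B} : CL Γ (.and A B) → CL Γ B
  | orI1  {Γ A B} : CL Γ A → CL Γ (.or A B)
  | orI2  {Γ A B} : CL Γ B → CL Γ (.or A B)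
  | orE   {Γ A B C} : CL Γ (.or A B) → CL (insert A Γ) C → CL (insert B Γ) C → CL Γ C
  | impI  {Γ A B} : CL (insert A Γ) B → CL Γ (.imp A B)
  | impE  {Γ A B} : CL Γ (.imp A B) → CL Γ A → CL Γ B
  | botE  {Γ A} : CL Γ .bot → CL Γ A
  | dne   {Γ A} : CL Γ ((A.neg).neg) → CL Γ A

/-- The value of a formula in a Heyting algebra, given the values `v` of the atoms. -/
def Formula.eval {H : Type*} [HeytingAlgebra H] (v : ℕ → H) : Formula → H
  | .atom n  => v n
  | .bot     => ⊥
  | .and X Y => X.eval v ⊓ Y.eval v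
  | .or X Y  => X.eval v ⊔ Y.eval v
  | .imp X Y => X.eval v ⇨ Y.eval v

/-- Soundness for Heyting-valued semantics. As `Γ` may be infinite, it is replaced by an arbitrary
lower bound `h` of the values of its members instead of their meet. -/
theorem IL.sound {H : Type*} [HeytingAlgebra H] (v : ℕ → H) {Γ : Set Formula} {A : Formula}
    (d : IL Γ A) : ∀ h : H, (∀ G ∈ Γ, h ≤ G.eval v) → h ≤ A.eval v := by
  -- Adding an assumption `X` to the context corresponds to shrinking the lower bound to `h ⊓ X`.
  have key : ∀ {Γ : Set Formula} {X : Formula} {h : H}, (∀ G ∈ Γ, h ≤ G.eval v) →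
      ∀ G ∈ insert X Γ, h ⊓ X.eval v ≤ G.eval v := by
    rintro Γ X h hΓ G (rfl | hG)
    · exact inf_le_right
    · exact inf_le_left.trans (hΓ G hG)
  induction d with
  | ax hA => exact fun h hΓ => hΓ _ hA
  | andI _ _ ih₁ ih₂ => exact fun h hΓ => le_inf (ih₁ h hΓ) (ih₂ h hΓ)
  | andE1 _ ih => exact fun h hΓ => (ih h hΓ).trans inf_le_left
  | andE2 _ ih => exact fun h hΓ => (ih h hΓ).trans inf_le_right
  | orI1 _ ih => exact fun h hΓ => (ih h hΓ).trans le_sup_left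
  | orI2 _ ih => exact fun h hΓ => (ih h hΓ).trans le_sup_right
  | orE _ _ _ ih₁ ih₂ ih₃ =>
    intro h hΓ
    refine (le_inf le_rfl (ih₁ h hΓ)).trans ?_
    simp only [Formula.eval, inf_sup_left]
    exact sup_le (ih₂ _ (key hΓ)) (ih₃ _ (key hΓ))
  | impI _ ih => exact fun h hΓ => le_himp_iff.2 (ih _ (key hΓ))
  | impE _ _ ih₁ ih₂ =>
    intro h hΓ
    exact (le_inf le_rfl (ih₂ h hΓ)).trans (le_himp_iff.1 (ih₁ h hΓ))
  | botE _ ih => exact fun h hΓ => (ih h hΓ).trans bot_le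

/-- The explicit witness for Theorem 1: for any atom p, ⊨ p ∨ ¬p, while
    ⊬_IL p ∨ ¬p. -/
theorem witness_excluded_middle (p : ℕ) :
    Cons ∅ ((Formula.atom p).or (Formula.atom p).neg) ∧
      ¬ IL ∅ ((Formula.atom p).or (Formula.atom p).neg) := by
  constructor
  · intro B _ _
    exact (em (AtomDerives B (some p))).imp_right fun hn hp => absurd hp hn
  · intro d
    have h := d.sound (fun _ => (1 : Fin 3)) ⊤ (by simp)
    have h_not : ¬ (⊤ : Fin 3) ≤ 1 ⊔ (1 ⇨ ⊥) := by decide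
    exact h_not h
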